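/- Fix z > 0. For an integer n ≥ 1 set ν = n − 1/2 and define G_ν(z) = z·Y'_ν(z)/Y_ν(z) = 1/2 + z·y'_{n−1}(z)/y_{n−1}(z), where the derivative is with respect to z. There exist a constant C > 0 and an integer N such that for every integer n ≥ N: −ν + z²/(2ν) − (1/6)·z²/ν² − C/ν³ ≤ G_ν(z) ≤ −ν + z²/(2ν) + (7/6)·z²/ν² + C/ν³, and in particular G_ν(z) < 0. -/

import Mathlib

/-- Spherical Bessel function of the first kind `j_n`, defined by the standard
recurrence `j_{n+1}(z) = ((2n+1)/z) j_n(z) - j_{n-1}(z)`. -/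
noncomputable def jsph : ℕ → ℝ → ℝ
  | 0, z => Real.sin z / z
  | 1, z => Real.sin z / z ^ 2 - Real.cos z / z
  | (n + 2), z => ((2 * (n : ℝ) + 3) / z) * jsph (n + 1) z - jsph n z

/-- Spherical Bessel function of the second kind `y_n`, defined by the standard
recurrence `y_{n+1}(z) = ((2n+1)/z) y_n(z) - y_{n-1}(z)`. -/
noncomputable def ysph : ℕ → ℝ → ℝ
  | 0, z => -Real.cos z / z
  | 1, z => -Real.cos z / z ^ 2 - Real.sin z / z
  | (n + 2), z => ((2 * (n : ℝ) + 3) / z) * ysph (n + 1) z - ysph n z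

/-- Spherical Hankel function of the first kind `h^{(1)}_n`. -/
noncomputable def h1sph (n : ℕ) (z : ℝ) : ℂ :=
  (jsph n z : ℂ) + Complex.I * (ysph n z : ℂ)

/-- Spherical Hankel function of the second kind `h^{(2)}_n`. -/
noncomputable def h2sph (n : ℕ) (z : ℝ) : ℂ :=
  (jsph n z : ℂ) - Complex.I * (ysph n z : ℂ)

section cart
open intervalIntegral MeasureTheory.MeasureSpace Set Real

noncomputable def cartI (n : ℕ) (θ : ℝ) : ℝ := ∫ x in (-1)..1, (1 - x ^ 2) ^ n * cos (x * θ)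

lemma cart_zero (θ : ℝ) : cartI 0 θ * θ = 2 * sin θ := by
  rw [mul_comm, cartI]
  simp [mul_integral_comp_mul_right, two_mul]

lemma cart_rec (n : ℕ) (θ : ℝ) :
    cartI (n + 1) θ * θ ^ 2 = - (2 * 2 * ((n + 1) * (0 ^ n * cos θ))) +
      2 * (n + 1) * (2 * n + 1) * cartI n θ - 4 * (n + 1) * n * cartI (n - 1) θ := by
  rw [cartI]
  let f (x : ℝ) : ℝ := 1 - x ^ 2
  let u₁ (x : ℝ) : ℝ := f x ^ (n + 1)
  let u₁' (x : ℝ) : ℝ := - (2 * (n + 1) * x * f x ^ n)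
  let v₁ (x : ℝ) : ℝ := sin (x * θ)
  let v₁' (x : ℝ) : ℝ := cos (x * θ) * θ
  let u₂ (x : ℝ) : ℝ := x * (f x) ^ n
  let u₂' (x : ℝ) : ℝ := (f x) ^ n - 2 * n * x ^ 2 * (f x) ^ (n - 1)
  let v₂ (x : ℝ) : ℝ := cos (x * θ)
  let v₂' (x : ℝ) : ℝ := -sin (x * θ) * θ
  have hfd : Continuous f := by fun_prop
  have hu₁d : Continuous u₁' := by fun_prop
  have hv₁d : Continuous v₁' := by fun_prop
  have hu₂d : Continuous u₂' := by fun_prop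
  have hv₂d : Continuous v₂' := by fun_prop
  have hu₁_eval_one : u₁ 1 = 0 := by simp only [u₁, f]; simp
  have hu₁_eval_neg_one : u₁ (-1) = 0 := by simp only [u₁, f]; simp
  have t : u₂ 1 * v₂ 1 - u₂ (-1) * v₂ (-1) = 2 * (0 ^ n * cos θ) := by simp [u₂, v₂, f, ← two_mul]
  have hf (x) : HasDerivAt f (- 2 * x) x := by
    convert! (hasDerivAt_pow 2 x).const_sub 1 using 1
    simp
  have hu₁ (x) : HasDerivAt u₁ (u₁' x) x := by
    convert! (hf x).pow _ using 1
    simp only [Nat.add_succ_sub_one, u₁', Nat.cast_add_one]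
    ring
  have hv₁ (x) : HasDerivAt v₁ (v₁' x) x := (hasDerivAt_mul_const θ).sin
  have hu₂ (x) : HasDerivAt u₂ (u₂' x) x := by
    convert! (hasDerivAt_id' x).fun_mul ((hf x).fun_pow _) using 1
    simp only [u₂']
    ring
  have hv₂ (x) : HasDerivAt v₂ (v₂' x) x := (hasDerivAt_mul_const θ).cos
  convert_to (∫ (x : ℝ) in (-1)..1, u₁ x * v₁' x) * θ = _ using 1
  · simp_rw [u₁, v₁', f, ← intervalIntegral.integral_mul_const, sq θ, mul_assoc]
  rw [integral_mul_deriv_eq_deriv_mul (fun x _ => hu₁ x) (fun x _ => hv₁ x)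
    (hu₁d.intervalIntegrable _ _) (hv₁d.intervalIntegrable _ _), hu₁_eval_one, hu₁_eval_neg_one,
    zero_mul, zero_mul, sub_zero, zero_sub, ← integral_neg, ← integral_mul_const]
  convert_to ((-2 : ℝ) * (n + 1)) * ∫ (x : ℝ) in (-1)..1, (u₂ x * v₂' x) = _ using 1
  · rw [← integral_const_mul]
    congr 1 with x
    dsimp [u₁', v₁, u₂, v₂']
    ring
  rw [integral_mul_deriv_eq_deriv_mul (fun x _ => hu₂ x) (fun x _ => hv₂ x)
    (hu₂d.intervalIntegrable _ _) (hv₂d.intervalIntegrable _ _),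
    mul_sub, t, neg_mul, neg_mul, neg_mul, sub_neg_eq_add]
  have (x : _) : u₂' x = (2 * n + 1) * f x ^ n - 2 * n * f x ^ (n - 1) := by
    cases n with
    | zero => simp [u₂']
    | succ n => ring!
  simp_rw [this, sub_mul, mul_assoc _ _ (v₂ _)]
  have : Continuous v₂ := by fun_prop
  rw [mul_mul_mul_comm, integral_sub, mul_sub, add_sub_assoc]
  · congr 1
    simp_rw [integral_const_mul]
    ring!
  all_goals exact Continuous.intervalIntegrable (by fun_prop) _ _

lemma cart_bound (n : ℕ) (θ : ℝ) : |cartI n θ| ≤ 2 := by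
  have h : ‖∫ x in (-1:ℝ)..1, (1 - x ^ 2) ^ n * cos (x * θ)‖ ≤ 1 * |(1:ℝ) - (-1)| := by
    apply intervalIntegral.norm_integral_le_of_norm_le_const
    intro x hx
    rw [Set.uIoc_of_le (by norm_num)] at hx
    obtain ⟨h1, h2⟩ := hx
    have h3 : 0 ≤ 1 - x ^ 2 := by nlinarith
    have h4 : 1 - x ^ 2 ≤ 1 := by nlinarith [sq_nonneg x]
    rw [norm_mul, Real.norm_eq_abs, Real.norm_eq_abs, abs_of_nonneg (pow_nonneg h3 n)]
    calc _ ≤ 1 * 1 := mul_le_mul (pow_le_one₀ h3 h4) (abs_cos_le_one _) (abs_nonneg _) zero_le_one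
      _ = 1 := by norm_num
  rw [Real.norm_eq_abs] at h
  have : |(1:ℝ) - (-1)| = 2 := by norm_num
  rw [this] at h
  unfold cartI
  linarith

end cart

lemma jsph_eq (z : ℝ) (hz : 0 < z) (n : ℕ) :
    (2 ^ (n + 1) * (n.factorial : ℝ) * jsph n z = z ^ n * cartI n z) ∧
    (2 ^ (n + 2) * ((n + 1).factorial : ℝ) * jsph (n + 1) z = z ^ (n + 1) * cartI (n + 1) z) := by
  induction n with
  | zero =>
    have h0 := cart_zero z
    have h1 := cart_rec 0 z
    have e0 : cartI 0 z = 2 * Real.sin z / z := by field_simp; linarith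
    simp only [e0] at h1
    constructor
    · simp [jsph, e0]; ring
    · have e1 : cartI 1 z = (-(4 * Real.cos z) + 4 * Real.sin z / z) / z ^ 2 := by
        rw [eq_div_iff (by positivity)]
        norm_num at h1
        rw [h1]; ring
      simp [jsph, e1]
      field_simp
      ring
  | succ n ih =>
    obtain ⟨h0, h1⟩ := ih
    refine ⟨h1, ?_⟩
    have h := cart_rec (n + 1) z
    simp only [Nat.add_sub_cancel] at h
    have e : z ^ (n + 1 + 1) * cartI (n + 1 + 1) z = z ^ n * (cartI (n + 1 + 1) z * z ^ 2) := by ring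
    rw [e, h]
    have f2 : ((n + 1 + 1).factorial : ℝ) = (n + 2) * ((n + 1).factorial : ℝ) := by
      rw [Nat.factorial_succ]; push_cast; ring
    have f1 : ((n + 1).factorial : ℝ) = (n + 1) * (n.factorial : ℝ) := by
      rw [Nat.factorial_succ]; push_cast; ring
    have h1' : z ^ n * cartI (n + 1) z = 2 ^ (n + 2) * ((n + 1).factorial : ℝ) * jsph (n + 1) z / z := by
      rw [h1]; field_simp; ring
    have e2 : jsph (n + 1 + 1) z = ((2 * (n : ℝ) + 3) / z) * jsph (n + 1) z - jsph n z := by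
      rw [jsph]
    rw [e2, f2]
    push_cast
    have : z ^ n * (-(2 * 2 * ((↑n + 1 + 1) * (0 ^ (n + 1) * Real.cos z))) + 2 * (↑n + 1 + 1) * (2 * (↑n + 1) + 1) * cartI (n + 1) z - 4 * (↑n + 1 + 1) * (↑n + 1) * cartI n z)
      = 2 * (n + 2) * (2 * n + 3) * (z ^ n * cartI (n + 1) z) - 4 * (n + 2) * (n + 1) * (z ^ n * cartI n z) := by
      ring
    rw [this, h1', ← h0, f1]
    ring

lemma jsph_bound (z : ℝ) (hz : 0 < z) (n : ℕ) : |jsph n z| ≤ z ^ n / (n.factorial : ℝ) := by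
  have h := (jsph_eq z hz n).1
  have hb := cart_bound n z
  have hf : (0:ℝ) < n.factorial := by exact_mod_cast n.factorial_pos
  have hp : (1:ℝ) ≤ 2 ^ n := one_le_pow₀ (by norm_num)
  have h2 : 2 ^ (n + 1) * (n.factorial : ℝ) * |jsph n z| = z ^ n * |cartI n z| := by
    rw [← abs_of_pos (show (0:ℝ) < 2 ^ (n + 1) * (n.factorial : ℝ) by positivity), ← abs_mul, h,
      abs_mul, abs_of_pos (pow_pos hz n)]
  rw [le_div_iff₀ hf]
  have h3 : z ^ n * |cartI n z| ≤ z ^ n * 2 := by gcongr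
  have h4 : (n.factorial : ℝ) * |jsph n z| ≤ 2 ^ n * ((n.factorial : ℝ) * |jsph n z|) :=
    le_mul_of_one_le_left (by positivity) hp
  rw [pow_succ] at h2
  nlinarith

lemma wronsk (z : ℝ) (hz : 0 < z) (n : ℕ) :
    jsph (n + 1) z * ysph n z - jsph n z * ysph (n + 1) z = 1 / z ^ 2 := by
  induction n with
  | zero =>
    simp only [jsph, ysph]
    field_simp
    have := Real.sin_sq_add_cos_sq z
    linear_combination z * this
  | succ n ih =>
    have e1 : jsph (n + 1 + 1) z = ((2 * (n : ℝ) + 3) / z) * jsph (n + 1) z - jsph n z := by rw [jsph]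
    have e2 : ysph (n + 1 + 1) z = ((2 * (n : ℝ) + 3) / z) * ysph (n + 1) z - ysph n z := by rw [ysph]
    rw [e1, e2, ← ih]
    ring

lemma ysph_deriv (n : ℕ) : ∀ z : ℝ, 0 < z →
    HasDerivAt (ysph n) (n / z * ysph n z - ysph (n + 1) z) z ∧
    HasDerivAt (ysph (n + 1)) (ysph n z - (n + 2) / z * ysph (n + 1) z) z := by
  induction n with
  | zero =>
    intro z hz
    have hz' := hz.ne'
    have f0 : ysph 0 = fun z => -Real.cos z / z := by funext; rw [ysph]
    have f1 : ysph (0 + 1) = fun z => -Real.cos z / z ^ 2 - Real.sin z / z := by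
      funext; rw [zero_add, ysph]
    rw [f0, f1]
    constructor
    · convert! ((Real.hasDerivAt_cos z).neg).div (hasDerivAt_id z) hz' using 1
      simp; field_simp; ring
    · convert! (((Real.hasDerivAt_cos z).neg).div (hasDerivAt_pow 2 z) (by positivity)).sub
        ((Real.hasDerivAt_sin z).div (hasDerivAt_id z) hz') using 1
      simp; field_simp; ring
  | succ n ih =>
    intro z hz
    have hz' := hz.ne'
    obtain ⟨h0, h1⟩ := ih z hz
    have f2 : ysph (n + 1 + 1) = fun z => ((2 * (n : ℝ) + 3) / z) * ysph (n + 1) z - ysph n z := by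
      funext; rw [ysph]
    rw [f2]
    constructor
    · convert! h1 using 1
      push_cast; field_simp; ring
    · convert! (((hasDerivAt_const z (2 * (n : ℝ) + 3)).div (hasDerivAt_id z) hz').mul h1).sub h0 using 1
      simp; field_simp; ring

lemma entry (z : ℝ) (hz : 0 < z) (M : ℕ) :
    ∃ m, M ≤ m ∧ ysph (m + 1) z ≠ 0 ∧ |z * ysph m z| ≤ |ysph (m + 1) z| := by
  by_contra! hc
  have hlt : ∀ m, M ≤ m → |ysph (m + 1) z| ≤ z * |ysph m z| := by
    intro m hm
    by_cases h0 : ysph (m + 1) z = 0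
    · rw [h0]; simp; positivity
    · have := hc m hm h0
      rw [abs_mul, abs_of_pos hz] at this
      exact this.le
  have hA : ∀ k, |ysph (M + k) z| ≤ |ysph M z| * z ^ k := by
    intro k
    induction k with
    | zero => simp
    | succ k ih =>
      calc _ ≤ z * |ysph (M + k) z| := hlt (M + k) (by omega)
        _ ≤ z * (|ysph M z| * z ^ k) := by gcongr
        _ = _ := by ring
  set A := |ysph M z| with hAdef
  have hA0 : 0 ≤ A := abs_nonneg _
  have key : ∀ k, 1 / z ^ 2 ≤ 2 * A * z ^ (M + 1) * ((z ^ 2) ^ k / (k.factorial : ℝ)) := by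
    intro k
    rw [← wronsk z hz (M + k)]
    have j0 := jsph_bound z hz (M + k)
    have j1 := jsph_bound z hz (M + k + 1)
    have y0 := hA k
    have y1 := hA (k + 1)
    have hkf : (0:ℝ) < k.factorial := by exact_mod_cast k.factorial_pos
    have g0 : (k.factorial : ℝ) ≤ (M + k).factorial := by
      exact_mod_cast Nat.factorial_le (by omega)
    have g1 : (k.factorial : ℝ) ≤ (M + k + 1).factorial := by
      exact_mod_cast Nat.factorial_le (by omega)
    have j0' : |jsph (M + k) z| ≤ z ^ (M + k) / (k.factorial : ℝ) := j0.trans (by gcongr)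
    have j1' : |jsph (M + k + 1) z| ≤ z ^ (M + k + 1) / (k.factorial : ℝ) := j1.trans (by gcongr)
    have p1 : |jsph (M + k + 1) z * ysph (M + k) z| ≤ z ^ (M + k + 1) / (k.factorial : ℝ) * (A * z ^ k) := by
      rw [abs_mul]; gcongr
    have p0 : |jsph (M + k) z * ysph (M + k + 1) z| ≤ z ^ (M + k) / (k.factorial : ℝ) * (A * z ^ (k + 1)) := by
      rw [abs_mul]; gcongr
      exact y1
    have e : z ^ (M + k + 1) / (k.factorial : ℝ) * (A * z ^ k) + z ^ (M + k) / (k.factorial : ℝ) * (A * z ^ (k + 1))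
      = 2 * A * z ^ (M + 1) * ((z ^ 2) ^ k / (k.factorial : ℝ)) := by
      field_simp; ring
    rw [← e]
    have := (abs_le.1 p1).2
    have := (abs_le.1 p0).1
    linarith
  have lim := (FloorSemiring.tendsto_pow_div_factorial_atTop (z ^ 2)).const_mul (2 * A * z ^ (M + 1))
  have := ge_of_tendsto' lim key
  rw [mul_zero] at this
  have : 0 < 1 / z ^ 2 := by positivity
  linarith

lemma y_rec (z : ℝ) (hz : 0 < z) (m : ℕ) :
    z * ysph (m + 2) z = (2 * m + 3) * ysph (m + 1) z - z * ysph m z := by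
  rw [ysph]; field_simp

lemma stay (z : ℝ) (hz : 0 < z) (m : ℕ) (hm : z ^ 2 ≤ m)
    (h0 : ysph (m + 1) z ≠ 0) (h : |z * ysph m z| ≤ |ysph (m + 1) z|) :
    ysph (m + 2) z ≠ 0 ∧ |z * ysph (m + 1) z| ≤ |ysph (m + 2) z| := by
  have hr := y_rec z hz m
  have hp : 0 < |ysph (m + 1) z| := abs_pos.2 h0
  have hm0 : (0:ℝ) ≤ m := by positivity
  have h1 : (2 * m + 3) * |ysph (m + 1) z| ≤ z * |ysph (m + 2) z| + |z * ysph m z| := by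
    have : (2 * m + 3) * ysph (m + 1) z = z * ysph (m + 2) z + z * ysph m z := by linarith
    rw [← abs_of_nonneg (show (0:ℝ) ≤ 2 * m + 3 by positivity), ← abs_mul, this]
    refine (abs_add_le _ _).trans ?_
    rw [abs_mul z (ysph (m + 2) z), abs_of_pos hz]
  have h2 : z * (z * |ysph (m + 1) z|) < z * |ysph (m + 2) z| := by nlinarith
  have h3 := lt_of_mul_lt_mul_left h2 hz.le
  refine ⟨?_, ?_⟩
  · intro h
    rw [h, abs_zero] at h3
    have : 0 < z * |ysph (m + 1) z| := by positivity
    linarith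
  · rw [abs_mul, abs_of_pos hz]; exact h3.le

/-- For fixed `z > 0`, asymptotic bound on `G_ν(z) = z Y'_ν(z)/Y_ν(z)
= 1/2 + z y'_{n-1}(z)/y_{n-1}(z)` with `ν = n - 1/2`; in particular `G_ν(z) < 0`. -/
theorem logderiv_bessel_Y_asymptotic (z : ℝ) (hz : 0 < z) :
    ∃ C : ℝ, 0 < C ∧ ∃ N : ℕ, 1 ≤ N ∧ ∀ n : ℕ, N ≤ n →
      (-((n : ℝ) - 1/2) + z ^ 2 / (2 * ((n : ℝ) - 1/2))
          - (1/6) * z ^ 2 / ((n : ℝ) - 1/2) ^ 2 - C / ((n : ℝ) - 1/2) ^ 3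
        ≤ 1/2 + z * deriv (ysph (n - 1)) z / ysph (n - 1) z) ∧
      (1/2 + z * deriv (ysph (n - 1)) z / ysph (n - 1) z
        ≤ -((n : ℝ) - 1/2) + z ^ 2 / (2 * ((n : ℝ) - 1/2))
          + (7/6) * z ^ 2 / ((n : ℝ) - 1/2) ^ 2 + C / ((n : ℝ) - 1/2) ^ 3) ∧
      (1/2 + z * deriv (ysph (n - 1)) z / ysph (n - 1) z < 0) := by
  obtain ⟨M, hM⟩ := exists_nat_ge (z ^ 2 + 10)
  obtain ⟨m₀, hm₀, hy0, hy1⟩ := entry z hz M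
  have all : ∀ k, ysph (m₀ + k + 1) z ≠ 0 ∧ |z * ysph (m₀ + k) z| ≤ |ysph (m₀ + k + 1) z| := by
    intro k
    induction k with
    | zero => exact ⟨hy0, hy1⟩
    | succ k ih =>
      refine stay z hz (m₀ + k) ?_ ih.1 ih.2
      have : (M : ℝ) ≤ m₀ := by exact_mod_cast hm₀
      push_cast
      have : (0:ℝ) ≤ k := by positivity
      linarith
  refine ⟨1, one_pos, m₀ + 3, by omega, ?_⟩
  intro n hn
  obtain ⟨k, rfl⟩ := Nat.exists_eq_add_of_le hn
  obtain ⟨ha0, ha1⟩ := all k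
  obtain ⟨hb0, hb1⟩ := all (k + 1)
  have hmm : z ^ 2 + 10 ≤ ((m₀ + k : ℕ) : ℝ) := by
    refine hM.trans ?_
    exact_mod_cast (by omega : M ≤ m₀ + k)
  have en : m₀ + 3 + k = (m₀ + k) + 3 := by omega
  rw [en]
  rw [show m₀ + (k + 1) = m₀ + k + 1 by omega] at hb0 hb1
  generalize m₀ + k = m at *
  have hz2 : 0 < z ^ 2 := by positivity
  have hd := ((ysph_deriv (m + 1) z hz).2).deriv
  have hr := y_rec z hz m
  rw [show m + 3 - 1 = m + 1 + 1 by omega, hd]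
  rw [show m + 2 = m + 1 + 1 by omega] at hr
  set a := ysph m z
  set b := ysph (m + 1) z
  set c := ysph (m + 1 + 1) z
  obtain ⟨ν, hν⟩ : ∃ ν : ℝ, ν = (m : ℝ) + 5 / 2 := ⟨_, rfl⟩
  have eν : ((m + 3 : ℕ) : ℝ) - 1 / 2 = ν := by rw [hν]; push_cast; ring
  rw [eν]
  have hm : (m : ℝ) = ν - 5 / 2 := by linarith
  have hG : 1 / 2 + z * (b - (((m + 1 : ℕ) : ℝ) + 2) / z * c) / c = -ν + z * b / c := by
    push_cast
    rw [hm]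
    field_simp
    ring
  rw [hG]
  set s := z * a / b with hs
  have hs1 : |s| ≤ 1 := by
    rw [hs, abs_div]; exact div_le_one_of_le₀ ha1 (abs_nonneg _)
  have ht1 : |z * b / c| ≤ 1 := by
    rw [abs_div]; exact div_le_one_of_le₀ hb1 (abs_nonneg _)
  obtain ⟨hs2, hs3⟩ := abs_le.1 hs1
  have hν' : 12 ≤ ν := by linarith
  have hden : 0 < 2 * ν - 2 - s := by linarith
  have ht : z * b / c = z ^ 2 / (2 * ν - 2 - s) := by
    rw [div_eq_div_iff hb0 hden.ne']
    have : z * a = s * b := by rw [hs]; field_simp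
    rw [this, hm] at hr
    linear_combination (-z) * hr
  have hν0 : 0 < ν := by linarith
  refine ⟨?_, ?_, ?_⟩
  · rw [ht]
    have h1 : z ^ 2 / (2 * ν) ≤ z ^ 2 / (2 * ν - 2 - s) := by
      apply div_le_div_of_nonneg_left hz2.le hden; linarith
    have h2 : 0 ≤ (1/6) * z ^ 2 / ν ^ 2 := by positivity
    have h3 : 0 ≤ 1 / ν ^ 3 := by positivity
    linarith
  · rw [ht]
    have h1 : z ^ 2 / (2 * ν - 2 - s) ≤ z ^ 2 / (2 * ν - 3) := by
      apply div_le_div_of_nonneg_left hz2.le <;> linarith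
    have h2 : z ^ 2 / (2 * ν - 3) ≤ z ^ 2 / (2 * ν) + (7/6) * z ^ 2 / ν ^ 2 := by
      have e : z ^ 2 / (2 * ν) + (7/6) * z ^ 2 / ν ^ 2 = z ^ 2 * ((3 * ν + 7) / (6 * ν ^ 2)) := by
        field_simp; ring
      rw [e, div_eq_mul_one_div]
      apply mul_le_mul_of_nonneg_left _ hz2.le
      rw [div_le_div_iff₀ (by linarith) (by positivity)]
      nlinarith
    have h3 : 0 ≤ 1 / ν ^ 3 := by positivity
    linarith
  · have := (abs_le.1 ht1).2
    linarith
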